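/- If q is even and q/2 ≤ k ≤ q-1, then the minimum Hamming distance of the puncture code P(C) of the [q^2+1, k, q^2+2-k]_{q^2} Reed-Solomon code C is at most q(k + 1 - q/2); that is, P(C) contains a nonzero codeword of weight q(k + 1 - q/2). -/

import Mathlib

open Polynomial

/-- The codeword of the (extended) `k`-dimensional Reed-Solomon code of length `q² + 1`
associated to a polynomial `f`: the evaluations of `f` at all elements of the field
(enumerated by `a`), followed by the coefficient of `X^(k-1)` in `f`. -/
def rsWord (q k : ℕ) {F : Type} [Field F] (a : Fin (q ^ 2) → F)
    (f : Polynomial F) (i : Fin (q ^ 2 + 1)) : F :=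
  if hi : (i : ℕ) < q ^ 2 then f.eval (a ⟨(i : ℕ), hi⟩) else f.coeff (k - 1)

/-- The puncture code `P(C)` of the `k`-dimensional Reed-Solomon code `C` of length `q² + 1`
over `F = 𝔽_{q²}`: all vectors `λ` with entries in the subfield `𝔽_q` (i.e. `λ_i^q = λ_i`)
such that `∑ λ_i u_i v_i^q = 0` for all codewords `u, v` of `C`. -/
def puncRS (q k : ℕ) {F : Type} [Field F] [Fintype F] (a : Fin (q ^ 2) → F) :
    Set (Fin (q ^ 2 + 1) → F) :=
  {lam | (∀ i, lam i ^ q = lam i) ∧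
    ∀ f g : Polynomial F, f.degree < (k : WithBot ℕ) → g.degree < (k : WithBot ℕ) →
      ∑ i, lam i * rsWord q k a f i * (rsWord q k a g i) ^ q = 0}

/-- The Hamming weight of a vector: the number of its nonzero coordinates. -/
noncomputable def wt {n : ℕ} {F : Type} [Zero F] (v : Fin n → F) : ℕ :=
  Set.ncard {i | v i ≠ 0}

/-!
Take finite fields `E ⊆ K ⊆ F` of orders `r`, `q = r ^ h` and `q ^ 2`. For a polynomial `P` over `F`
of small degree, the word with entries `λ_x = Tr_{F/K}(P(x)) = P(x) + P(x)^q`, and `0` at infinity,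
lies in the puncture code: `∑ P f g^q` vanishes because a polynomial of degree less than `q ^ 2 - 1`
sums to zero over `F`, and `∑ P^q f g^q` is the `q`-th power of the same sum with `f` and `g`
exchanged.

For `P(x) = (∑_{i < h} x^(r^i)) ∏_{c ∈ S} (x + x^q - c)` with `S ⊆ K`, the second factor has values
in `K`, so `λ_x = Tr_{K/E}(t) ∏_{c ∈ S} (t - c)` with `t = Tr_{F/K}(x)`. If `S` consists of elements
of nonzero trace over `E`, exactly `q - q / r - |S|` values of `t` give a nonzero entry, and each of
them is attained `q` times. The codeword of weight `q (k + 1 - q / r)` comes from `|S| = q - k - 1`.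
-/

section FiniteField

variable {E K F : Type*} [Field E] [Field K] [Field F]

theorem sum_eval_eq_zero_of_natDegree_lt [Fintype F] {p : F[X]}
    (hp : p.natDegree < Fintype.card F - 1) : ∑ x, p.eval x = 0 := by
  simp_rw [eval_eq_sum_range]
  rw [Finset.sum_comm]
  refine Finset.sum_eq_zero fun i hi => ?_
  have hi' : i < Fintype.card F - 1 := by grind
  rw [← Finset.mul_sum, FiniteField.sum_pow_lt_card_sub_one F i hi', mul_zero]

theorem sum_eval_mul_eval_mul_eval_pow_eq_zero [Fintype F] {q k : ℕ} {P f g : F[X]}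
    (hP : P.natDegree + (q + 1) * (k - 1) < Fintype.card F - 1)
    (hf : f.degree < k) (hg : g.degree < k) :
    ∑ x, P.eval x * f.eval x * g.eval x ^ q = 0 := by
  have natDegree_le {p : F[X]} (hp : p.degree < k) : p.natDegree ≤ k - 1 :=
    natDegree_le_pred (natDegree_le_of_degree_le hp.le) (coeff_eq_zero_of_degree_lt hp)
  have hdeg : (P * f * g ^ q).natDegree ≤ P.natDegree + (k - 1) + q * (k - 1) :=
    natDegree_mul_le_of_le (natDegree_mul_le_of_le le_rfl (natDegree_le hf))
      (natDegree_pow_le_of_le q (natDegree_le hg))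
  simpa using sum_eval_eq_zero_of_natDegree_lt (p := P * f * g ^ q) (by linarith)

theorem finrank_eq_of_natCard_eq_pow {V : Type*} [AddCommGroup V] [Module K V] [Finite K]
    {n : ℕ} (hV : Nat.card V = Nat.card K ^ n) : Module.finrank K V = n := by
  have : Finite V := Nat.finite_of_card_ne_zero (hV.trans_ne (pow_ne_zero n Nat.card_pos.ne'))
  rw [Module.natCard_eq_pow_finrank (K := K)] at hV
  exact Nat.pow_right_injective Finite.one_lt_card hV

theorem exists_subfield_natCard_eq [Finite F] {q n : ℕ} (hn : n ≠ 0) (hF : Nat.card F = q ^ n) :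
    ∃ K : Subfield F, Nat.card K = q := by
  cases nonempty_fintype F
  have hqn : IsPrimePow (q ^ n) := by
    rw [← hF, Nat.card_eq_fintype_card]
    exact FiniteField.isPrimePow_card F
  obtain ⟨p, m, hp, hm, rfl⟩ := (isPrimePow_nat_iff q).1 ((isPrimePow_pow_iff hn).1 hqn)
  have : Fact p.Prime := ⟨hp⟩
  have : CharP F p := charP_of_card_eq_prime_pow (f := m * n) (by
    rw [← Nat.card_eq_fintype_card, hF, pow_mul])
  let := ZMod.algebra F p
  have hfinrank : Module.finrank (ZMod p) F = m * n :=
    finrank_eq_of_natCard_eq_pow (by rw [hF, Nat.card_zmod, pow_mul])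
  obtain ⟨φ⟩ : Nonempty (GaloisField p m →ₐ[ZMod p] F) :=
    FiniteField.nonempty_algHom_of_finrank_dvd <| by
      rw [GaloisField.finrank p hm.ne', hfinrank]
      exact dvd_mul_right m n
  refine ⟨φ.toRingHom.fieldRange, ?_⟩
  rw [← GaloisField.card p m hm.ne']
  exact Nat.card_range_of_injective φ.injective

theorem natCard_mul_ncard_preimage {V W : Type*} [AddGroup V] [AddGroup W] [Finite V]
    {φ : V →+ W} (hφ : Function.Surjective φ) (Y : Set W) :
    Nat.card W * (φ ⁻¹' Y).ncard = Y.ncard * Nat.card V := by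
  classical
  have := Finite.of_surjective φ hφ
  cases nonempty_fintype V
  cases nonempty_fintype W
  have hfiber (Z : Finset W) :
      (φ ⁻¹' Z).ncard = Z.card * ({x | φ x = 0} : Finset V).card := by
    rw [Set.ncard_eq_toFinset_card', Finset.card_eq_sum_card_fiberwise (f := φ) (t := Z)
      (by intro x; simp), Finset.sum_const_nat]
    intro y hy
    rw [← AddMonoidHom.card_fiber_eq_of_mem_range φ (hφ y) (hφ 0)]
    congr 1
    grind
  have huniv := hfiber Finset.univ
  simp only [Finset.coe_univ, Set.preimage_univ, Set.ncard_univ, Finset.card_univ] at huniv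
  have hY := hfiber Y.toFinset
  rw [Set.coe_toFinset, ← Set.ncard_eq_toFinset_card'] at hY
  rw [hY, huniv, Nat.card_eq_fintype_card]
  ring

variable [Finite F] [Algebra K F]

variable (K F) in
theorem natCard_mul_ncard_trace_preimage (Y : Set K) :
    Nat.card K * (Algebra.trace K F ⁻¹' Y).ncard = Y.ncard * Nat.card F :=
  have := Finite.of_injective _ (algebraMap K F).injective
  natCard_mul_ncard_preimage (φ := (Algebra.trace K F).toAddMonoidHom)
    (Algebra.trace_surjective K F) Y

variable (K F) in
theorem ncard_trace_ne_zero :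
    {x : F | Algebra.trace K F x ≠ 0}.ncard = Nat.card F - Nat.card F / Nat.card K := by
  have := Finite.of_injective _ (algebraMap K F).injective
  have hker := natCard_mul_ncard_trace_preimage K F {0}
  rw [Set.ncard_singleton, one_mul] at hker
  rw [← hker, Nat.mul_div_cancel_left _ Nat.card_pos, hker, ← Set.ncard_compl]
  rfl

theorem trace_pow_char_pow (p n : ℕ) [Fact p.Prime] [CharP F p] (x : F) :
    Algebra.trace K F (x ^ p ^ n) = Algebra.trace K F x ^ p ^ n := by
  apply (algebraMap K F).injective
  rw [map_pow (algebraMap K F), FiniteField.algebraMap_trace_eq_sum_pow,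
    FiniteField.algebraMap_trace_eq_sum_pow, sum_pow_char_pow]
  exact Finset.sum_congr rfl fun i _ => pow_right_comm x _ _

theorem trace_pow_natCard_pow [Algebra E K] (n : ℕ) (x : F) :
    Algebra.trace K F (x ^ Nat.card E ^ n) = Algebra.trace K F x ^ Nat.card E ^ n := by
  have := Finite.of_injective _ ((algebraMap K F).comp (algebraMap E K)).injective
  cases nonempty_fintype E
  obtain ⟨p, _, m, hp, hE⟩ := FiniteField.card' E
  have : Fact p.Prime := ⟨hp⟩
  have : CharP F p :=
    charP_of_injective_ringHom ((algebraMap K F).comp (algebraMap E K)).injective p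
  rw [Nat.card_eq_fintype_card, hE, ← pow_mul, trace_pow_char_pow]

theorem sum_pow_mul_mul_pow_eq_pow_sum (hKF : Module.finrank K F = 2) {ι : Type*} (s : Finset ι)
    (u v w : ι → F) :
    ∑ i ∈ s, u i ^ Nat.card K * v i * w i ^ Nat.card K =
      (∑ i ∈ s, u i * w i * v i ^ Nat.card K) ^ Nat.card K := by
  have := Finite.of_injective _ (algebraMap K F).injective
  cases nonempty_fintype K
  cases nonempty_fintype F
  have hF : Fintype.card F = Fintype.card K * Fintype.card K := by
    rw [Module.card_eq_pow_finrank (K := K), hKF, sq]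
  rw [Nat.card_eq_fintype_card, ← FiniteField.frobeniusAlgHom_apply K F, map_sum]
  refine Finset.sum_congr rfl fun i _ => ?_
  rw [FiniteField.frobeniusAlgHom_apply, mul_pow, mul_pow, ← pow_mul, ← hF, FiniteField.pow_card,
    mul_right_comm]

end FiniteField

section TracePolynomial

/-- The additive polynomial `∑_{i < n} X ^ (q ^ i)`, which evaluates to the trace on an extension
of degree `n` of a field of order `q`; it is evaluated on larger fields as well. -/
noncomputable def tracePoly (R : Type*) [Semiring R] (q n : ℕ) : R[X] :=
  ∑ i ∈ Finset.range n, X ^ q ^ i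

theorem natDegree_tracePoly_le {R : Type*} [Semiring R] {q : ℕ} (hq : q ≠ 0) (n : ℕ) :
    (tracePoly R q n).natDegree ≤ q ^ (n - 1) := by
  refine natDegree_sum_le_of_forall_le _ _ fun i hi => (natDegree_X_pow_le _).trans ?_
  exact Nat.pow_le_pow_right (Nat.pos_of_ne_zero hq) (by grind)

variable {E K F : Type*} [Field E] [Field K] [Field F] [Finite F] [Algebra K F]

variable (K) in
theorem eval_tracePoly_natCard (x : F) :
    (tracePoly F (Nat.card K) (Module.finrank K F)).eval x =
      algebraMap K F (Algebra.trace K F x) := by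
  simp only [tracePoly, eval_finsetSum, eval_pow, eval_X,
    FiniteField.algebraMap_trace_eq_sum_pow]

variable [Algebra E K]

variable (E K) in
theorem trace_eval_tracePoly_natCard (x : F) :
    Algebra.trace K F ((tracePoly F (Nat.card E) (Module.finrank E K)).eval x) =
      algebraMap E K (Algebra.trace E K (Algebra.trace K F x)) := by
  have := Finite.of_injective _ (algebraMap K F).injective
  simp only [tracePoly, eval_finsetSum, eval_pow, eval_X, map_sum, trace_pow_natCard_pow,
    FiniteField.algebraMap_trace_eq_sum_pow]

variable (E F) in
/-- The polynomial of which the relative trace to `K` takes the value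
`Tr_{K/E}(t) * ∏_{c ∈ S} (t - c)` at `x`, where `t = Tr_{F/K}(x)`. -/
noncomputable def puncturePoly (S : Finset K) : F[X] :=
  tracePoly F (Nat.card E) (Module.finrank E K) *
    ∏ c ∈ S, (tracePoly F (Nat.card K) (Module.finrank K F) - C (algebraMap K F c))

theorem trace_eval_puncturePoly (S : Finset K) (x : F) :
    Algebra.trace K F ((puncturePoly E F S).eval x) =
      algebraMap E K (Algebra.trace E K (Algebra.trace K F x)) *
        ∏ c ∈ S, (Algebra.trace K F x - c) := by
  have hsmul : (puncturePoly E F S).eval x = (∏ c ∈ S, (Algebra.trace K F x - c)) •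
      (tracePoly F (Nat.card E) (Module.finrank E K)).eval x := by
    simp only [puncturePoly, eval_mul, eval_prod, eval_sub, eval_C, eval_tracePoly_natCard,
      Algebra.smul_def, map_prod, map_sub, mul_comm]
  rw [hsmul, map_smul, trace_eval_tracePoly_natCard, smul_eq_mul, mul_comm]

theorem trace_eval_puncturePoly_ne_zero_iff {S : Finset K} {x : F} :
    Algebra.trace K F ((puncturePoly E F S).eval x) ≠ 0 ↔
      Algebra.trace K F x ∈ {t : K | Algebra.trace E K t ≠ 0} \ S := by
  rw [trace_eval_puncturePoly, mul_ne_zero_iff, Finset.prod_ne_zero_iff, _root_.map_ne_zero]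
  simp only [sub_ne_zero, Set.mem_sdiff, Set.mem_ofPred_eq, Finset.mem_coe]
  grind

theorem natDegree_puncturePoly_le (S : Finset K) :
    (puncturePoly E F S).natDegree ≤
      Nat.card E ^ (Module.finrank E K - 1) + S.card * Nat.card K ^ (Module.finrank K F - 1) := by
  have := Finite.of_injective _ (algebraMap K F).injective
  have := Finite.of_injective _ (algebraMap E K).injective
  refine natDegree_mul_le_of_le (natDegree_tracePoly_le Nat.card_pos.ne' _) ?_
  refine (natDegree_prod_le _ _).trans (Finset.sum_le_card_nsmul _ _ _ fun c _ => ?_)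
  rw [natDegree_sub_C]
  exact natDegree_tracePoly_le Nat.card_pos.ne' _

theorem natCard_mul_ncard_trace_eval_puncturePoly_ne_zero {S : Finset K}
    (hS : ∀ c ∈ S, Algebra.trace E K c ≠ 0) :
    Nat.card K * {x : F | Algebra.trace K F ((puncturePoly E F S).eval x) ≠ 0}.ncard =
      (Nat.card K - Nat.card K / Nat.card E - S.card) * Nat.card F := by
  have := Finite.of_injective _ (algebraMap K F).injective
  have hS' : (S : Set K) ⊆ {t | Algebra.trace E K t ≠ 0} := hS
  simp only [trace_eval_puncturePoly_ne_zero_iff]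
  rw [← ncard_trace_ne_zero, ← Set.ncard_coe_finset S, ← Set.ncard_sdiff hS']
  exact natCard_mul_ncard_trace_preimage K F _

end TracePolynomial

section PunctureCode

/-- The word of length `n + 1` with entry `G (a i)` at each affine position `i < n` and entry `0`
at the last position, the one at which `rsWord` records a coefficient. -/
def affineWord {α M : Type*} [Zero M] {n : ℕ} (a : Fin n → α) (G : α → M) : Fin (n + 1) → M :=
  Fin.snoc (α := fun _ => M) (G ∘ a) 0

theorem wt_affineWord {α : Type*} {M : Type} [Zero M] {n : ℕ} {a : Fin n → α}
    (ha : Function.Bijective a) (G : α → M) :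
    wt (affineWord a G) = {x | G x ≠ 0}.ncard := by
  have hsupport : {i | affineWord a G i ≠ 0} = Fin.castSucc '' (a ⁻¹' {x | G x ≠ 0}) := by
    ext i
    induction i using Fin.lastCases <;> simp [affineWord]
  rw [wt, hsupport, Set.ncard_image_of_injective _ (Fin.castSucc_injective n),
    Set.ncard_preimage_of_injective_subset_range ha.injective (by simp [ha.surjective.range_eq])]

theorem ne_zero_of_wt_ne_zero {M : Type} [Zero M] {n : ℕ} {v : Fin n → M} (hv : wt v ≠ 0) :
    v ≠ 0 := by
  rintro rfl
  simp [wt] at hv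

variable {F : Type} [Field F] [Fintype F]

theorem sum_affineWord_mul_rsWord {q : ℕ} {a : Fin (q ^ 2) → F}
    (ha : Function.Bijective a) (k : ℕ) (G : F → F) (f g : F[X]) :
    ∑ i, affineWord a G i * rsWord q k a f i * rsWord q k a g i ^ q =
      ∑ x, G x * f.eval x * g.eval x ^ q := by
  rw [Fin.sum_univ_castSucc, ← ha.sum_comp]
  simp [affineWord, rsWord]

theorem affineWord_trace_mem_puncRS {K : Type*} [Field K] [Algebra K F] {q k : ℕ}
    (hK : Nat.card K = q) (hKF : Module.finrank K F = 2) {a : Fin (q ^ 2) → F}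
    (ha : Function.Bijective a) {P : F[X]}
    (hP : P.natDegree + (q + 1) * (k - 1) < q ^ 2 - 1) :
    affineWord a (fun x => algebraMap K F (Algebra.trace K F (P.eval x))) ∈ puncRS q k a := by
  subst hK
  have := Finite.of_injective _ (algebraMap K F).injective
  cases nonempty_fintype K
  have hF : Fintype.card F = Nat.card K ^ 2 := by
    rw [Module.card_eq_pow_finrank (K := K), hKF, Nat.card_eq_fintype_card]
  refine ⟨fun i => ?_, fun f g hf hg => ?_⟩
  · induction i using Fin.lastCases with
    | last => simp [affineWord]
    | cast i =>
      simp only [affineWord, Fin.snoc_castSucc, Function.comp_apply]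
      rw [← map_pow (algebraMap K F), Nat.card_eq_fintype_card, FiniteField.pow_card]
  · have htrace (z : F) : algebraMap K F (Algebra.trace K F z) = z + z ^ Nat.card K := by
      simp [FiniteField.algebraMap_trace_eq_sum_pow, hKF, Finset.sum_range_succ]
    rw [← hF] at hP
    simp only [sum_affineWord_mul_rsWord ha, htrace, add_mul, Finset.sum_add_distrib,
      sum_pow_mul_mul_pow_eq_pow_sum hKF, sum_eval_mul_eval_mul_eval_pow_eq_zero hP hf hg,
      sum_eval_mul_eval_mul_eval_pow_eq_zero hP hg hf]
    simp

theorem exists_mem_puncRS_wt_eq {E K : Type*} [Field E] [Field K] [Algebra E K]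
    [Algebra K F] {q k s : ℕ} (hK : Nat.card K = q) (hKF : Module.finrank K F = 2)
    {a : Fin (q ^ 2) → F} (ha : Function.Bijective a) (hs : s ≤ q - q / Nat.card E)
    (hdeg : q / Nat.card E + s * q + (q + 1) * (k - 1) < q ^ 2 - 1) :
    ∃ lam ∈ puncRS q k a, wt lam = q * (q - q / Nat.card E - s) := by
  have := Finite.of_injective _ (algebraMap K F).injective
  have := Finite.of_injective _ (algebraMap E K).injective
  obtain ⟨S, hS, rfl⟩ : ∃ S : Finset K, (∀ c ∈ S, Algebra.trace E K c ≠ 0) ∧ S.card = s := by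
    rw [← hK, ← ncard_trace_ne_zero, Set.ncard_eq_toFinset_card] at hs
    obtain ⟨S, hS, hcard⟩ := Finset.exists_subset_card_eq hs
    exact ⟨S, fun c hc => by simpa using hS hc, hcard⟩
  have hqE : Nat.card E ^ (Module.finrank E K - 1) = q / Nat.card E := by
    rw [Nat.pow_sub_one Nat.card_pos.ne' Module.finrank_pos.ne',
      ← Module.natCard_eq_pow_finrank, hK]
  have hP := natDegree_puncturePoly_le (E := E) (F := F) S
  rw [hqE, hKF, hK, pow_one] at hP
  refine ⟨_, affineWord_trace_mem_puncRS hK hKF ha (P := puncturePoly E F S) (by linarith), ?_⟩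
  have hcard := natCard_mul_ncard_trace_eval_puncturePoly_ne_zero (F := F) hS
  rw [Module.natCard_eq_pow_finrank (K := K) (V := F), hKF, hK] at hcard
  have hq : 0 < q := hK ▸ Nat.card_pos
  simp only [wt_affineWord ha, ne_eq, FaithfulSMul.algebraMap_eq_zero_iff]
  exact Nat.eq_of_mul_eq_mul_left hq (hcard.trans (by ring))

end PunctureCode

theorem puncture_RS_weight_upper_q_even_general
    (r h q k : ℕ) (hq : q = r ^ h) (hk1 : q ≤ r * k) (hk2 : k < q)
    (F : Type) [Field F] [Fintype F] (hF : Fintype.card F = q ^ 2)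
    (a : Fin (q ^ 2) → F) (ha : Function.Bijective a) :
    ∃ lam ∈ puncRS q k a, lam ≠ 0 ∧ wt lam = q * (k + 1 - q / r) := by
  have hh : h ≠ 0 := by
    rintro rfl
    rw [pow_zero] at hq
    grind
  rw [← Nat.card_eq_fintype_card] at hF
  obtain ⟨K, hK⟩ := exists_subfield_natCard_eq two_ne_zero hF
  obtain ⟨E, rfl⟩ := exists_subfield_natCard_eq hh (hK.trans hq)
  have hKF : Module.finrank K F = 2 := finrank_eq_of_natCard_eq_pow (by rw [hF, hK])
  have hqk : q / Nat.card E ≤ k := Nat.div_le_of_le_mul hk1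
  have hdeg : q / Nat.card E + (q - (k + 1)) * q + (q + 1) * (k - 1) < q ^ 2 - 1 := by
    obtain ⟨j, rfl⟩ : ∃ j, k = j + 1 := Nat.exists_eq_add_one.2 (by grind)
    obtain ⟨m, hm⟩ : ∃ m, q = j + 2 + m := Nat.exists_eq_add_of_le hk2
    generalize q / Nat.card E = u at hqk ⊢
    subst hm
    rw [Nat.add_sub_cancel_left, Nat.add_sub_cancel]
    exact Nat.lt_sub_of_add_lt (by linarith)
  obtain ⟨lam, hmem, hwt⟩ := exists_mem_puncRS_wt_eq (E := E) hK hKF ha (by omega) hdeg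
  rw [show q - q / Nat.card E - (q - (k + 1)) = k + 1 - q / Nat.card E by omega] at hwt
  have hpos : 0 < q * (k + 1 - q / Nat.card E) := Nat.mul_pos (by omega) (by omega)
  exact ⟨lam, hmem, ne_zero_of_wt_ne_zero (hwt ▸ hpos.ne'), hwt⟩

/-- If `q = 2^h` is even and `q/2 ≤ k ≤ q-1`, then the minimum Hamming
distance of the puncture code `P(C)` of the `[q²+1, k, q²+2-k]_{q²}` Reed-Solomon code `C`
is at most `q(k + 1 - q/2)`: `P(C)` contains a nonzero codeword of weight `q(k + 1 - q/2)`. -/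
theorem puncture_RS_weight_upper_q_even
    (q k h : ℕ) (hh : 1 ≤ h) (hq : q = 2 ^ h) (hk1 : q ≤ 2 * k) (hk2 : k ≤ q - 1)
    (F : Type) [Field F] [Fintype F] (hF : Fintype.card F = q ^ 2)
    (a : Fin (q ^ 2) → F) (ha : Function.Bijective a) :
    ∃ lam ∈ puncRS q k a, lam ≠ 0 ∧ wt lam = q * (k + 1 - q / 2) :=
  puncture_RS_weight_upper_q_even_general 2 h q k hq hk1 (by grind) F hF a ha
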